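/- (Jackson's summation of a terminating very-well-poised balanced ₈φ₇) Let q, a, b, c, d, e be complex numbers and n a nonnegative integer satisfying a² q^{n+1} = b c d e, with all denominator factors below nonzero. Then ∑_{k=0}^{n} ((1 - a q^{2k})/(1 - a)) · ((a;q)_k (b;q)_k (c;q)_k (d;q)_k (e;q)_k (q^{-n};q)_k / ((q;q)_k (aq/b;q)_k (aq/c;q)_k (aq/d;q)_k (aq/e;q)_k (aq^{n+1};q)_k)) q^k = (aq;q)_n (aq/(bc);q)_n (aq/(bd);q)_n (aq/(cd);q)_n / ((aq/b;q)_n (aq/c;q)_n (aq/d;q)_n (aq/(bcd);q)_n). -/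

import Mathlib

/-- The finite q-shifted factorial `(a;q)_k = ∏_{j=0}^{k-1} (1 - a q^j)`. -/
noncomputable def qPoch (a q : ℂ) (k : ℕ) : ℂ := ∏ j ∈ Finset.range k, (1 - a * q ^ j)

/-!
Put `f = q⁻ⁿ`, so that the balancing condition reads `a²q = bcdef`, which is invariant under
`(a, e, f) ↦ (aq, eq, fq)`. Let `t` and `t'` be the summands before and after this shift, and let
`r` be the factor by which the product side changes. Then both staggered differences
`∑_{j ≤ k} t j - r * ∑_{j < k} t' j` and `∑_{j ≤ k} t j - r * ∑_{j ≤ k} t' j` are products: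
passing from either one to the next amounts to Weierstrass' three-term relation. At `k = n` the
first difference contains the factor `(fq; q)_n = 0`, so the two sums agree up to `r`, and since
`f q = q⁻⁽ⁿ⁻¹⁾` the identity follows by induction on `n`.
-/

/-- The quotient `(x; q)_k / (aq/x; q)_k` of a numerator parameter of a well-poised series and the
denominator parameter paired with it. -/
noncomputable def wellPoisedRatio (q a x : ℂ) (k : ℕ) : ℂ := qPoch x q k / qPoch (a * q / x) q k

/-- A summand of the very-well-poised series `₈φ₇` with parameters `a; b, c, d, e, f` and argument
`q`, multiplied by `1 - a` so that `a = 1` is not singular. The pair `(a; q)_k / (q; q)_k` is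
written as the ratio with `x = a`. -/
noncomputable def wellPoisedTerm (q a b c d e f : ℂ) (k : ℕ) : ℂ :=
  (1 - a * q ^ (2 * k)) *
    (wellPoisedRatio q a a k * wellPoisedRatio q a b k * wellPoisedRatio q a c k *
      wellPoisedRatio q a d k * wellPoisedRatio q a e k * wellPoisedRatio q a f k) * q ^ k

/-- The first `n + 1` summands of the well-poised series are free of vanishing denominators. -/
def WellPoisedRegular (q a b c d e f : ℂ) (n : ℕ) : Prop :=
  ∀ x ∈ ({a, b, c, d, e, f} : Set ℂ), x ≠ 0 ∧ qPoch (a * q / x) q n ≠ 0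

/-- The factor relating the sum of `wellPoisedTerm q a b c d e f` to the one with parameters
`a * q; b, c, d, e * q, f * q`. -/
noncomputable def contiguousFactor (q a b c d : ℂ) : ℂ :=
  (1 - a) * (1 - a * q / (b * c)) * (1 - a * q / (b * d)) * (1 - a * q / (c * d)) /
    ((1 - a * q / b) * (1 - a * q / c) * (1 - a * q / d) * (1 - a * q / (b * c * d)))

/-- Closed form of `∑_{j ≤ k} t j - r * ∑_{j < k} t' j`, where `t` and `t'` are the summands with
parameters `a; b, c, d, e, f` and `a * q; b, c, d, e * q, f * q`, and `r` is `contiguousFactor`. -/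
noncomputable def leadingDefect (q a b c d e f : ℂ) (k : ℕ) : ℂ :=
  (1 - a) * wellPoisedRatio q (a * q) (a * q) k * wellPoisedRatio q (a * q) (e * q) k *
    wellPoisedRatio q (a * q) (f * q) k * wellPoisedRatio q a b k * wellPoisedRatio q a c k *
    wellPoisedRatio q a d k * ((1 - a / (e * f) * q ^ k) / (1 - a / (e * f)))

/-- Closed form of `∑_{j ≤ k} t j - r * ∑_{j ≤ k} t' j`, in the notation of `leadingDefect`. -/
noncomputable def evenDefect (q a b c d e f : ℂ) (k : ℕ) : ℂ :=
  (1 - a) * wellPoisedRatio q (a * q) (a * q) k * wellPoisedRatio q (a * q) (e * q) k *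
    wellPoisedRatio q (a * q) (f * q) k * wellPoisedRatio q a b (k + 1) *
    wellPoisedRatio q a c (k + 1) * wellPoisedRatio q a d (k + 1) *
    ((1 - e * f * q ^ (k + 1)) / (1 - a / (e * f)))

-- The trigonometric case of Weierstrass' three-term relation for theta functions.
theorem prod_one_sub_mul_sub_prod_one_sub_div {F : Type*} [Field F] {a b c d e : F} (x : F)
    (hb : b ≠ 0) (hc : c ≠ 0) (hd : d ≠ 0) (he : e ≠ 0) (h : b * c * d * e = a ^ 2) :
    (1 - b * x) * (1 - c * x) * (1 - d * x) * (1 - e * x) -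
        (1 - a * x / b) * (1 - a * x / c) * (1 - a * x / d) * (1 - a * x / e) =
      a * x / e * (1 - a * x ^ 2) * (1 - a / (b * c)) * (1 - a / (b * d)) * (1 - a / (c * d)) := by
  obtain rfl : e = a ^ 2 / (b * c * d) := by rw [← h]; field_simp
  have ha : a ≠ 0 := by rintro rfl; simp at he
  field_simp
  ring

theorem prod_one_sub_div_one_sub_eq_add {F : Type*} [Field F] {a e f x : F} (ha : a ≠ 0)
    (he : e ≠ 0) (hf : f ≠ 0) (hx : 1 - x ≠ 0) (hex : 1 - a * x / e ≠ 0)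
    (hfx : 1 - a * x / f ≠ 0) (h : 1 - a / (e * f) ≠ 0) :
    (1 - a * x) / (1 - x) * ((1 - e * x) / (1 - a * x / e)) *
        ((1 - f * x) / (1 - a * x / f)) * ((1 - a / (e * f) * x) / (1 - a / (e * f))) =
      (1 - e * f * x) / (1 - a / (e * f)) +
        (1 - a * x ^ 2) * x * (1 / (1 - x)) * ((1 - e) / (1 - a * x / e)) *
          ((1 - f) / (1 - a * x / f)) := by
  have key := prod_one_sub_mul_sub_prod_one_sub_div x he hf
    (div_ne_zero ha (mul_ne_zero he hf)) ha (show e * f * (a / (e * f)) * a = a ^ 2 by field_simp)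
  have hle : a / (e * (a / (e * f))) = f := by field_simp
  have hlf : a / (f * (a / (e * f))) = e := by field_simp
  have hlx : a * x / (a / (e * f)) = e * f * x := by field_simp
  rw [hle, hlf, hlx, mul_div_cancel_left₀ x ha] at key
  generalize 1 - a * x / e = u, 1 - a * x / f = v, 1 - x = w, a / (e * f) = l at *
  field_simp
  linear_combination key

theorem prod_one_sub_div_one_sub_add_eq {F : Type*} [Field F] {a b c d e x : F} (hb : b ≠ 0)
    (hc : c ≠ 0) (hd : d ≠ 0) (he : e ≠ 0) (hbal : b * c * d * e = a ^ 2)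
    (hbx : 1 - a * x / b ≠ 0) (hcx : 1 - a * x / c ≠ 0) (hdx : 1 - a * x / d ≠ 0)
    (h : 1 - a / e ≠ 0) :
    (1 - b * x) / (1 - a * x / b) * ((1 - c * x) / (1 - a * x / c)) *
          ((1 - d * x) / (1 - a * x / d)) * ((1 - e * x) / (1 - a / e)) +
        (1 - a * x ^ 2) * x * ((1 - a / (b * c)) * (1 - a / (b * d)) * (1 - a / (c * d)) /
          (1 - a / (b * c * d))) / ((1 - a * x / b) * (1 - a * x / c) * (1 - a * x / d)) =
      (1 - a / e * x) / (1 - a / e) := by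
  have key := prod_one_sub_mul_sub_prod_one_sub_div x hb hc hd he hbal
  have ha : a ≠ 0 := by rintro rfl; simp_all
  have hbcd : 1 - a / (b * c * d) = -(1 - a / e) / (a / e) := by
    rw [show b * c * d = a ^ 2 / e from by field_simp; exact hbal]
    field_simp
    ring
  rw [hbcd]
  rw [mul_div_right_comm a x e] at key
  have hae : a / e ≠ 0 := div_ne_zero ha he
  generalize 1 - a * x / b = u, 1 - a * x / c = v, 1 - a * x / d = w, a / (b * c) = l₁,
    a / (b * d) = l₂, a / (c * d) = l₃ at *
  generalize a / e = l at *
  field_simp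
  linear_combination key

theorem qPoch_succ (x q : ℂ) (k : ℕ) : qPoch x q (k + 1) = qPoch x q k * (1 - x * q ^ k) :=
  Finset.prod_range_succ _ _

theorem qPoch_succ' (x q : ℂ) (k : ℕ) : qPoch x q (k + 1) = (1 - x) * qPoch (x * q) q k := by
  simp only [qPoch, Finset.prod_range_succ', pow_zero, mul_one, pow_succ', mul_assoc]
  exact mul_comm _ _

theorem qPoch_ne_zero_iff {x q : ℂ} {n : ℕ} : qPoch x q n ≠ 0 ↔ ∀ j < n, 1 - x * q ^ j ≠ 0 := by
  simp [qPoch, Finset.prod_ne_zero_iff]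

theorem wellPoisedRatio_succ (q a x : ℂ) (k : ℕ) :
    wellPoisedRatio q a x (k + 1) =
      wellPoisedRatio q a x k * ((1 - x * q ^ k) / (1 - a * q ^ (k + 1) / x)) := by
  rw [wellPoisedRatio, wellPoisedRatio, qPoch_succ, qPoch_succ, div_mul_div_comm]
  ring

theorem wellPoisedRatio_succ' {q : ℂ} (hq : q ≠ 0) (a x : ℂ) (k : ℕ) :
    wellPoisedRatio q a x (k + 1) =
      wellPoisedRatio q (a * q) (x * q) k * ((1 - x) / (1 - a * q ^ (k + 1) / x)) := by
  rw [wellPoisedRatio, wellPoisedRatio, qPoch_succ', qPoch_succ, mul_div_mul_right _ _ hq,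
    div_mul_div_comm]
  ring

theorem wellPoisedRatio_mul {q a x : ℂ} (h : 1 - a * q / x ≠ 0) (k : ℕ) :
    wellPoisedRatio q (a * q) x k =
      wellPoisedRatio q a x k * ((1 - a * q / x) / (1 - a * q ^ (k + 1) / x)) := by
  have hshift : qPoch (a * q / x) q k * (1 - a * q ^ (k + 1) / x) =
      (1 - a * q / x) * qPoch (a * q * q / x) q k := by
    rw [mul_div_right_comm (a * q), ← qPoch_succ', qPoch_succ]
    ring
  rw [wellPoisedRatio, wellPoisedRatio, div_mul_div_comm, hshift, mul_comm (1 - _),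
    mul_div_mul_right _ _ h]

namespace WellPoisedRegular

variable {q a b c d e f : ℂ} {n : ℕ}

theorem one_sub_div_ne_zero {x : ℂ} (h : WellPoisedRegular q a b c d e f n)
    (hx : x ∈ ({a, b, c, d, e, f} : Set ℂ)) {j : ℕ} (hj : j < n) :
    1 - a * q ^ (j + 1) / x ≠ 0 := by
  rw [pow_succ', ← mul_assoc, mul_div_right_comm]
  exact qPoch_ne_zero_iff.1 (h x hx).2 j hj

theorem shift (hq : q ≠ 0) (h : WellPoisedRegular q a b c d e f (n + 1)) :
    WellPoisedRegular q (a * q) b c d (e * q) (f * q) n := by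
  have hsame {x : ℂ} (hx : x ∈ ({a, b, c, d, e, f} : Set ℂ)) :
      x ≠ 0 ∧ qPoch (a * q * q / x) q n ≠ 0 := by
    obtain ⟨hx0, hxn⟩ := h x hx
    rw [qPoch_succ', ← mul_div_right_comm] at hxn
    exact ⟨hx0, right_ne_zero_of_mul hxn⟩
  have hmul {x : ℂ} (hx : x ∈ ({a, b, c, d, e, f} : Set ℂ)) :
      x * q ≠ 0 ∧ qPoch (a * q * q / (x * q)) q n ≠ 0 := by
    obtain ⟨hx0, hxn⟩ := h x hx
    rw [qPoch_succ] at hxn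
    rw [mul_div_mul_right _ _ hq]
    exact ⟨mul_ne_zero hx0 hq, left_ne_zero_of_mul hxn⟩
  rintro x (rfl | rfl | rfl | rfl | rfl | rfl)
  exacts [hmul (by simp), hsame (by simp), hsame (by simp), hsame (by simp), hmul (by simp),
    hmul (by simp)]

end WellPoisedRegular

section Contiguous

variable {q a b c d e f : ℂ} {n k : ℕ}

theorem leadingDefect_zero (h : 1 - a / (e * f) ≠ 0) :
    leadingDefect q a b c d e f 0 = wellPoisedTerm q a b c d e f 0 := by
  simp [leadingDefect, wellPoisedTerm, wellPoisedRatio, qPoch, h]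

theorem leadingDefect_succ (hq : q ≠ 0) (hreg : WellPoisedRegular q a b c d e f n) (hk : k < n)
    (h : 1 - a / (e * f) ≠ 0) :
    leadingDefect q a b c d e f (k + 1) =
      evenDefect q a b c d e f k + wellPoisedTerm q a b c d e f (k + 1) := by
  have ha : a ≠ 0 := (hreg a (by simp)).1
  have he : e ≠ 0 := (hreg e (by simp)).1
  have hf : f ≠ 0 := (hreg f (by simp)).1
  have ha' := hreg.one_sub_div_ne_zero (x := a) (by simp) hk
  have he' := hreg.one_sub_div_ne_zero (x := e) (by simp) hk
  have hf' := hreg.one_sub_div_ne_zero (x := f) (by simp) hk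
  have hshift (x : ℂ) : wellPoisedRatio q (a * q) (x * q) (k + 1) =
      wellPoisedRatio q (a * q) (x * q) k *
        ((1 - x * q ^ (k + 1)) / (1 - a * q ^ (k + 1) / x)) := by
    rw [wellPoisedRatio_succ, mul_right_comm a, mul_div_mul_right _ _ hq, mul_assoc x, ← pow_succ']
  have hsq : q ^ (2 * (k + 1)) = (q ^ (k + 1)) ^ 2 := by ring
  rw [leadingDefect, evenDefect, wellPoisedTerm, hshift, hshift, hshift,
    wellPoisedRatio_succ' hq a a, wellPoisedRatio_succ' hq a e, wellPoisedRatio_succ' hq a f, hsq]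
  generalize q ^ (k + 1) = x at *
  rw [mul_div_cancel_left₀ x ha] at ha' ⊢
  linear_combination (1 - a) * wellPoisedRatio q (a * q) (a * q) k *
    wellPoisedRatio q (a * q) (e * q) k * wellPoisedRatio q (a * q) (f * q) k *
    wellPoisedRatio q a b (k + 1) * wellPoisedRatio q a c (k + 1) *
    wellPoisedRatio q a d (k + 1) * prod_one_sub_div_one_sub_eq_add ha he hf ha' he' hf' h

theorem contiguousFactor_mul_wellPoisedTerm (hreg : WellPoisedRegular q a b c d e f n)
    (hk : k < n) :
    contiguousFactor q a b c d * wellPoisedTerm q (a * q) b c d (e * q) (f * q) k =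
      (1 - a) * wellPoisedRatio q (a * q) (a * q) k * wellPoisedRatio q (a * q) (e * q) k *
        wellPoisedRatio q (a * q) (f * q) k * wellPoisedRatio q a b k * wellPoisedRatio q a c k *
        wellPoisedRatio q a d k *
        ((1 - a * q * (q ^ k) ^ 2) * q ^ k * ((1 - a * q / (b * c)) * (1 - a * q / (b * d)) *
          (1 - a * q / (c * d)) / (1 - a * q / (b * c * d))) /
          ((1 - a * q ^ (k + 1) / b) * (1 - a * q ^ (k + 1) / c) *
            (1 - a * q ^ (k + 1) / d))) := by
  have hfirst (x : ℂ) (hx : x ∈ ({a, b, c, d, e, f} : Set ℂ)) : 1 - a * q / x ≠ 0 := by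
    simpa using hreg.one_sub_div_ne_zero hx (j := 0) (by lia)
  have hb := hfirst b (by simp)
  have hc := hfirst c (by simp)
  have hd := hfirst d (by simp)
  rw [contiguousFactor, wellPoisedTerm, wellPoisedRatio_mul hb, wellPoisedRatio_mul hc,
    wellPoisedRatio_mul hd, mul_comm 2 k, pow_mul]
  generalize 1 - a * q / b = u, 1 - a * q / c = v, 1 - a * q / d = w,
    1 - a * q ^ (k + 1) / b = u', 1 - a * q ^ (k + 1) / c = v', 1 - a * q ^ (k + 1) / d = w',
    1 - a * q / (b * c * d) = l at *
  have hcancel (N : ℂ) : N / (u * v * w * l) * (u / u' * (v / v') * (w / w')) =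
      N / l / (u' * v' * w') := by
    field_simp
  linear_combination (1 - a * q * (q ^ k) ^ 2) * q ^ k * wellPoisedRatio q (a * q) (a * q) k *
    wellPoisedRatio q (a * q) (e * q) k * wellPoisedRatio q (a * q) (f * q) k *
    wellPoisedRatio q a b k * wellPoisedRatio q a c k * wellPoisedRatio q a d k *
    hcancel ((1 - a) * (1 - a * q / (b * c)) * (1 - a * q / (b * d)) * (1 - a * q / (c * d)))

theorem evenDefect_add (hq : q ≠ 0) (hreg : WellPoisedRegular q a b c d e f n) (hk : k < n)
    (hbal : a ^ 2 * q = b * c * d * e * f) (h : 1 - a / (e * f) ≠ 0) :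
    evenDefect q a b c d e f k + contiguousFactor q a b c d *
      wellPoisedTerm q (a * q) b c d (e * q) (f * q) k = leadingDefect q a b c d e f k := by
  have hb0 : b ≠ 0 := (hreg b (by simp)).1
  have hc0 : c ≠ 0 := (hreg c (by simp)).1
  have hd0 : d ≠ 0 := (hreg d (by simp)).1
  have hefq : e * f * q ≠ 0 :=
    mul_ne_zero (mul_ne_zero (hreg e (by simp)).1 (hreg f (by simp)).1) hq
  have hbal' : b * c * d * (e * f * q) = (a * q) ^ 2 := by linear_combination -q * hbal
  have hef : a * q / (e * f * q) = a / (e * f) := mul_div_mul_right _ _ hq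
  have hx : a * q ^ (k + 1) = a * q * q ^ k := by ring
  have hx' : e * f * q ^ (k + 1) = e * f * q * q ^ k := by ring
  have hb := hreg.one_sub_div_ne_zero (x := b) (by simp) hk
  have hc := hreg.one_sub_div_ne_zero (x := c) (by simp) hk
  have hd := hreg.one_sub_div_ne_zero (x := d) (by simp) hk
  rw [contiguousFactor_mul_wellPoisedTerm hreg hk, leadingDefect, evenDefect,
    wellPoisedRatio_succ, wellPoisedRatio_succ, wellPoisedRatio_succ]
  rw [hx] at hb hc hd ⊢
  rw [hx', ← hef]
  linear_combination (1 - a) * wellPoisedRatio q (a * q) (a * q) k *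
    wellPoisedRatio q (a * q) (e * q) k * wellPoisedRatio q (a * q) (f * q) k *
    wellPoisedRatio q a b k * wellPoisedRatio q a c k * wellPoisedRatio q a d k *
    prod_one_sub_div_one_sub_add_eq hb0 hc0 hd0 hefq hbal' hb hc hd (hef ▸ h)

theorem sum_wellPoisedTerm_contiguous (hq : q ≠ 0) (hreg : WellPoisedRegular q a b c d e f n)
    (hbal : a ^ 2 * q = b * c * d * e * f) (h : 1 - a / (e * f) ≠ 0) (hk : k ≤ n) :
    ∑ j ∈ Finset.range (k + 1), wellPoisedTerm q a b c d e f j =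
      contiguousFactor q a b c d *
          ∑ j ∈ Finset.range k, wellPoisedTerm q (a * q) b c d (e * q) (f * q) j +
        leadingDefect q a b c d e f k := by
  induction k with
  | zero => simp [leadingDefect_zero h]
  | succ k ih =>
    rw [Finset.sum_range_succ, ih (by lia), Finset.sum_range_succ _ k,
      leadingDefect_succ hq hreg hk h, ← evenDefect_add hq hreg hk hbal h]
    ring

theorem sum_wellPoisedTerm (hq : q ≠ 0) (hreg : WellPoisedRegular q a b c d e f n)
    (hbal : a ^ 2 * q = b * c * d * e * f) (hf : f * q ^ n = 1) :
    ∑ k ∈ Finset.range (n + 1), wellPoisedTerm q a b c d e f k =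
      qPoch a q (n + 1) * qPoch (a * q / (b * c)) q n * qPoch (a * q / (b * d)) q n *
          qPoch (a * q / (c * d)) q n /
        (qPoch (a * q / b) q n * qPoch (a * q / c) q n * qPoch (a * q / d) q n *
          qPoch (a * q / (b * c * d)) q n) := by
  induction n generalizing a e f with
  | zero => simp [wellPoisedTerm, wellPoisedRatio, qPoch]
  | succ n ih =>
    have hef : 1 - a / (e * f) ≠ 0 := by
      have := hreg.one_sub_div_ne_zero (x := e) (by simp) n.lt_succ_self
      have he := (hreg e (by simp)).1
      have hf' := (hreg f (by simp)).1
      rwa [show a / (e * f) = a * q ^ (n + 1) / e by field_simp; linear_combination -a * hf]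
    have hvanish : leadingDefect q a b c d e f (n + 1) = 0 := by
      simp [leadingDefect, wellPoisedRatio, qPoch_succ, mul_assoc, ← pow_succ', hf]
    rw [sum_wellPoisedTerm_contiguous hq hreg hbal hef le_rfl, hvanish, add_zero,
      ih (hreg.shift hq) (by linear_combination q ^ 2 * hbal) (by rw [← hf]; ring)]
    simp only [contiguousFactor, div_mul_div_comm, qPoch_succ' _ q n, qPoch_succ' a,
      mul_div_right_comm _ q]
    congr 1 <;> ring

end Contiguous

/-- Jackson's summation of a terminating very-well-poised balanced ₈φ₇ series:
if `a²q^{n+1} = bcde`, then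
`∑_{k=0}^n ((1-aq^{2k})/(1-a))
    ((a,b,c,d,e,q^{-n};q)_k/((q,aq/b,aq/c,aq/d,aq/e,aq^{n+1};q)_k)) q^k
  = ((aq,aq/(bc),aq/(bd),aq/(cd);q)_n)/((aq/b,aq/c,aq/d,aq/(bcd);q)_n)`,
assuming nonzero denominator factors. -/
theorem jackson_8phi7_summation (q a b c d e : ℂ) (n : ℕ)
    (hbal : a ^ 2 * q ^ (n + 1) = b * c * d * e)
    (hq : q ≠ 0) (ha1 : a ≠ 1)
    (hb : b ≠ 0) (hc : c ≠ 0) (hd : d ≠ 0) (he : e ≠ 0)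
    (hden : ∀ k ≤ n, qPoch q q k ≠ 0 ∧ qPoch (a * q / b) q k ≠ 0 ∧
      qPoch (a * q / c) q k ≠ 0 ∧ qPoch (a * q / d) q k ≠ 0 ∧
      qPoch (a * q / e) q k ≠ 0 ∧ qPoch (a * q ^ (n + 1)) q k ≠ 0)
    (hden' : qPoch (a * q / (b * c * d)) q n ≠ 0) :
    ∑ k ∈ Finset.range (n + 1),
        (1 - a * q ^ (2 * k)) / (1 - a) *
          (qPoch a q k * qPoch b q k * qPoch c q k * qPoch d q k * qPoch e q k *
              qPoch (q ^ (-(n : ℤ))) q k /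
            (qPoch q q k * qPoch (a * q / b) q k * qPoch (a * q / c) q k *
              qPoch (a * q / d) q k * qPoch (a * q / e) q k *
                qPoch (a * q ^ (n + 1)) q k)) * q ^ k =
      qPoch (a * q) q n * qPoch (a * q / (b * c)) q n * qPoch (a * q / (b * d)) q n *
          qPoch (a * q / (c * d)) q n /
        (qPoch (a * q / b) q n * qPoch (a * q / c) q n * qPoch (a * q / d) q n *
          qPoch (a * q / (b * c * d)) q n) := by
  obtain ⟨hqn, hbn, hcn, hdn, hen, hfn⟩ := hden n le_rfl
  set f : ℂ := q ^ (-(n : ℤ)) with hf_def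
  have hf : f * q ^ n = 1 := by simp [hf_def, hq]
  have hf0 : f ≠ 0 := left_ne_zero_of_mul_eq_one hf
  have ha : a ≠ 0 := by rintro rfl; simp [hb, hc, hd, he] at hbal
  have hqa : a * q / a = q := mul_div_cancel_left₀ q ha
  have hqf : a * q / f = a * q ^ (n + 1) :=
    (div_eq_iff hf0).2 (by linear_combination -a * q * hf)
  have hreg : WellPoisedRegular q a b c d e f n := by
    simp only [WellPoisedRegular, Set.forall_mem_insert, Set.mem_singleton_iff, forall_eq, hqa, hqf]
    exact ⟨⟨ha, hqn⟩, ⟨hb, hbn⟩, ⟨hc, hcn⟩, ⟨hd, hdn⟩, ⟨he, hen⟩, hf0, hfn⟩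
  calc
    _ = ∑ k ∈ Finset.range (n + 1), wellPoisedTerm q a b c d e f k / (1 - a) := by
      refine Finset.sum_congr rfl fun k _ => ?_
      simp only [wellPoisedTerm, wellPoisedRatio, hqa, hqf]
      ring
    _ = _ := by
      have hbal' : a ^ 2 * q = b * c * d * e * f := by
        linear_combination f * hbal - a ^ 2 * q * hf
      rw [← Finset.sum_div, sum_wellPoisedTerm hq hreg hbal' hf, qPoch_succ']
      field_simp [sub_ne_zero.2 ha1.symm]
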